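/- The reduction of f_δ modulo 59 factors in (ℤ/59ℤ)[X] as (X + 39)·h(X), where h(X) = X^15 + 8X^14 + 43X^13 + 23X^12 + 19X^11 + 38X^10 + 9X^9 + 6X^8 + 17X^7 + 34X^6 + 46X^5 + 43X^4 + 27X^3 + 50X^2 + 56X + 1, up to the leading unit; moreover h is irreducible over ℤ/59ℤ (so the factorization type is 1 + 15, giving a 15-cycle). -/

import Mathlib

open Polynomial in
/-- The degree-16 integer polynomial `f_δ` whose root in [0.167, 0.169] is the
optimal value of δ. -/
noncomputable def fdelta : Polynomial ℤ :=
  589824 * X ^ 16 - 7077888 * X ^ 15 + 41189376 * X ^ 14 - 154386432 * X ^ 13 +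
    416788480 * X ^ 12 - 857112576 * X ^ 11 + 1383417856 * X ^ 10 - 1779354624 * X ^ 9 +
    1834437632 * X ^ 8 - 1514108928 * X ^ 7 + 992782336 * X ^ 6 - 509312064 * X ^ 5 +
    199354208 * X ^ 4 - 57160752 * X ^ 3 + 11200088 * X ^ 2 - 1313928 * X + 67417

open Polynomial

/-- The irreducible degree-15 factor of `f_δ` modulo 59. -/
noncomputable def h59 : Polynomial (ZMod 59) :=
  X ^ 15 + 8 * X ^ 14 + 43 * X ^ 13 + 23 * X ^ 12 + 19 * X ^ 11 + 38 * X ^ 10 +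
    9 * X ^ 9 + 6 * X ^ 8 + 17 * X ^ 7 + 34 * X ^ 6 + 46 * X ^ 5 + 43 * X ^ 4 +
    27 * X ^ 3 + 50 * X ^ 2 + 56 * X + 1

namespace F59

/-- Coefficients of `X ^ 15 - h` modulo 59, lowest degree first. -/
def red : List ℕ := [58, 3, 9, 32, 16, 13, 25, 42, 53, 50, 21, 40, 36, 16, 51]

/-- `a + c * b`, coefficientwise, modulo 59. -/
def addMul (c : ℕ) : List ℕ → List ℕ → List ℕ
  | [], bs => bs.map (fun b => (c * b) % 59)
  | a :: as, [] => a :: as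
  | a :: as, b :: bs => ((a + c * b) % 59) :: addMul c as bs

/-- Multiplication by `X` modulo `h`. -/
def mulX (l : List ℕ) : List ℕ :=
  match l.drop 14 with
  | [c] => addMul c (0 :: l.take 14) red
  | _ => 0 :: l

/-- `k n`, written so that kernel reduction evaluates `n` first. -/
def forceNat {β : Type} (n : ℕ) (k : ℕ → β) : β :=
  match n with
  | 0 => k 0
  | m + 1 => k (Nat.succ m)

/-- `k l`, written so that kernel reduction evaluates `l` first. -/
def force {β : Type} : List ℕ → (List ℕ → β) → β
  | [], k => k []
  | a :: l, k => forceNat a (fun a' => force l (fun l' => k (a' :: l')))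

lemma forceNat_eq {β : Type} (n : ℕ) (k : ℕ → β) : forceNat n k = k n := by
  cases n <;> rfl

lemma force_eq {β : Type} (l : List ℕ) (k : List ℕ → β) : force l k = k l := by
  induction l generalizing k with
  | nil => rfl
  | cons a l ih => simp only [force, forceNat_eq, ih]

/-- Multiplication modulo `h`. -/
def mul (a : List ℕ) : List ℕ → List ℕ
  | [] => []
  | b :: bs => force (mul a bs) fun r => force (mulX r) fun r' => addMul b r' a

/-- The 59th power modulo `h`. -/
def pow59 (a0 : List ℕ) : List ℕ :=
  force a0 fun a =>
  force (mul a a) fun a2 =>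
  force (mul a2 a) fun a3 =>
  force (mul a3 a3) fun a6 =>
  force (mul a6 a) fun a7 =>
  force (mul a7 a7) fun a14 =>
  force (mul a14 a14) fun a28 =>
  force (mul a28 a) fun a29 =>
  force (mul a29 a29) fun a58 =>
  mul a58 a

/-- `X ^ (59 ^ k)` modulo `h`. -/
def frob : ℕ → List ℕ
  | 0 => [0, 1, 0, 0, 0, 0, 0, 0, 0, 0, 0, 0, 0, 0, 0]
  | 1 => [41, 23, 22, 13, 36, 52, 29, 18, 14, 16, 4, 31, 41, 31, 12]
  | 2 => [8, 24, 32, 4, 32, 18, 46, 41, 0, 32, 36, 24, 8, 32, 51]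
  | 3 => [33, 29, 22, 15, 0, 57, 21, 31, 14, 58, 22, 27, 11, 9, 57]
  | 4 => [12, 4, 18, 54, 1, 13, 17, 39, 51, 40, 21, 55, 53, 37, 27]
  | 5 => [17, 49, 52, 39, 38, 57, 23, 6, 56, 54, 44, 11, 49, 46, 35]
  | 6 => [25, 29, 26, 35, 15, 22, 46, 16, 29, 25, 25, 45, 23, 22, 12]
  | 7 => [25, 40, 43, 2, 20, 23, 16, 29, 4, 25, 27, 50, 0, 53, 41]
  | _ => []

/-- Inverse of `X ^ (59 ^ k) - X` modulo `h`. -/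
def inv : ℕ → List ℕ
  | 1 => [11, 18, 45, 53, 32, 15, 12, 29, 33, 29, 58, 15, 18, 48, 7]
  | 2 => [14, 26, 40, 3, 34, 56, 12, 19, 0, 39, 25, 17, 39, 10, 56]
  | 3 => [2, 6, 54, 17, 30, 18, 15, 45, 32, 18, 46, 26, 29, 38, 28]
  | 4 => [0, 4, 43, 17, 7, 15, 36, 54, 26, 40, 8, 38, 37, 23, 34]
  | 5 => [55, 32, 52, 43, 31, 16, 50, 10, 5, 45, 5, 54, 54, 9, 18]
  | 6 => [26, 55, 1, 16, 5, 30, 3, 19, 10, 2, 54, 51, 4, 2, 0]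
  | 7 => [41, 1, 21, 11, 57, 32, 43, 58, 29, 49, 31, 5, 35, 12, 8]
  | _ => []

/-- Evaluation of a coefficient list. -/
def ev {A : Type*} [CommRing A] (x : A) : List ℕ → A
  | [] => 0
  | a :: l => (a : A) + x * ev x l

section
variable {A : Type*} [CommRing A] [CharP A 59] (x : A)

lemma cast_mod (n : ℕ) : ((n % 59 : ℕ) : A) = (n : A) := by
  conv_rhs => rw [← Nat.mod_add_div n 59]
  have : ((59 : ℕ) : A) = 0 := CharP.cast_eq_zero A 59
  rw [Nat.cast_add, Nat.cast_mul, this]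
  ring

lemma ev_map (c : ℕ) (l : List ℕ) :
    ev x (l.map (fun b => (c * b) % 59)) = c * ev x l := by
  induction l with
  | nil => simp [ev]
  | cons b l ih =>
    simp only [List.map_cons, ev, ih, cast_mod]
    push_cast
    ring

lemma ev_addMul (c : ℕ) (a b : List ℕ) : ev x (addMul c a b) = ev x a + c * ev x b := by
  induction a generalizing b with
  | nil => simp only [addMul, ev_map, ev, zero_add]
  | cons a as ih =>
    cases b with
    | nil => simp [addMul, ev]
    | cons b bs =>
      simp only [addMul, ev, ih, cast_mod]
      push_cast
      ring

lemma ev_take_drop (n : ℕ) (l : List ℕ) :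
    ev x l = ev x (l.take n) + x ^ n * ev x (l.drop n) := by
  induction n generalizing l with
  | zero => simp [ev]
  | succ n ih =>
    cases l with
    | nil => simp [ev]
    | cons a l =>
      simp only [List.take_succ_cons, List.drop_succ_cons, ev]
      rw [ih l]
      ring

lemma ev_mulX (hx : x ^ 15 = ev x red) (l : List ℕ) : ev x (mulX l) = x * ev x l := by
  unfold mulX
  split
  · next c hc =>
    have h := ev_take_drop x 14 l
    rw [hc] at h
    rw [ev_addMul, ← hx, h]
    simp only [ev]
    push_cast
    ring
  · simp [ev]

lemma ev_mul (hx : x ^ 15 = ev x red) (a b : List ℕ) : ev x (mul a b) = ev x a * ev x b := by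
  induction b with
  | nil => simp [mul, ev]
  | cons b bs ih =>
    simp only [mul, force_eq, ev_addMul, ev_mulX x hx, ih, ev]
    ring

lemma ev_pow59 (hx : x ^ 15 = ev x red) (a : List ℕ) : ev x (pow59 a) = ev x a ^ 59 := by
  simp only [pow59, force_eq, ev_mul x hx]
  ring

lemma frob_step : ∀ k < 7, pow59 (frob k) = frob (k + 1) := by
  decide +kernel

lemma inv_step : ∀ k < 7, mul (inv (k + 1)) (frob (k + 1)) = addMul 1 (mulX (inv (k + 1))) [1] := by
  decide +kernel

lemma ev_frob (hx : x ^ 15 = ev x red) (k : ℕ) (hk : k ≤ 7) : ev x (frob k) = x ^ 59 ^ k := by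
  induction k with
  | zero => simp [frob, ev]
  | succ k ih =>
    rw [← frob_step k (by omega), ev_pow59 x hx, ih (by omega), ← pow_mul, ← pow_succ]

lemma no_fixed [Nontrivial A] (hx : x ^ 15 = ev x red) (k : ℕ) (hk0 : 0 < k) (hk : k ≤ 7) :
    x ^ 59 ^ k ≠ x := by
  intro hfix
  obtain ⟨j, rfl⟩ : ∃ j, k = j + 1 := ⟨k - 1, by omega⟩
  have h := congrArg (ev x) (inv_step j (by omega))
  rw [ev_mul x hx, ev_frob x hx _ hk, hfix, ev_addMul, ev_mulX x hx] at h
  simp only [ev] at h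
  push_cast at h
  have h1 : (1 : A) = 0 := by linear_combination -h
  exact one_ne_zero h1

end

lemma h59_monic_natDegree : h59.Monic ∧ h59.natDegree = 15 := by
  have hd : h59.natDegree = 15 := by
    unfold h59
    compute_degree!
  refine ⟨?_, hd⟩
  unfold h59
  monicity!

lemma h59_irreducible : Irreducible h59 := by
  have : Fact (Nat.Prime 59) := ⟨by norm_num⟩
  obtain ⟨hm, hd⟩ := h59_monic_natDegree
  have h1 : h59 ≠ 1 := by
    intro h
    rw [h, natDegree_one] at hd
    omega
  rw [hm.irreducible_iff_lt_natDegree_lt h1, hd]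
  intro q hq hqd hdvd
  rw [Finset.mem_Ioc] at hqd
  obtain ⟨g, hg, hgq⟩ := exists_irreducible_of_natDegree_pos hqd.1
  have hgd : g.natDegree ≤ 7 := (natDegree_le_of_dvd hgq hq.ne_zero).trans hqd.2
  have : Fact (Irreducible g) := ⟨hg⟩
  have : CharP (AdjoinRoot g) 59 := charP_of_injective_algebraMap
    (algebraMap (ZMod 59) (AdjoinRoot g)).injective 59
  have hfix := (hg.natDegree_dvd_iff_dvd_X_pow_card_pow_sub_X).1 (dvd_refl g.natDegree)
  rw [Nat.card_zmod, ← AdjoinRoot.mk_eq_zero] at hfix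
  simp only [map_sub, map_pow, AdjoinRoot.mk_X] at hfix
  have hroot : AdjoinRoot.mk g h59 = 0 := AdjoinRoot.mk_eq_zero.2 (hgq.trans hdvd)
  simp only [h59, map_add, map_mul, map_pow, AdjoinRoot.mk_X, map_ofNat, map_one] at hroot
  have h59z : (59 : AdjoinRoot g) = 0 := by
    exact_mod_cast CharP.cast_eq_zero (AdjoinRoot g) 59
  refine no_fixed (AdjoinRoot.root g) ?_ g.natDegree hg.natDegree_pos hgd (sub_eq_zero.1 hfix)
  generalize AdjoinRoot.root g = x at hroot
  simp only [ev, red]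
  push_cast
  linear_combination hroot - ((1) * x ^ 0 + (1) * x ^ 1 + (1) * x ^ 2 + (1) * x ^ 3 + (1) * x ^ 4 + (1) * x ^ 5 + (1) * x ^ 6 + (1) * x ^ 7 + (1) * x ^ 8 + (1) * x ^ 9 + (1) * x ^ 10 + (1) * x ^ 11 + (1) * x ^ 12 + (1) * x ^ 13 + (1) * x ^ 14) * h59z

end F59

/-- The reduction of `f_δ` modulo 59 factors, up to the leading unit, as `(X + 39) · h`
with `h` irreducible over ℤ/59ℤ, i.e. the factorization type is 1 + 15 (a 15-cycle). -/
theorem fdelta_mod_59_factorization :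
    (∃ u : ZMod 59, IsUnit u ∧
        fdelta.map (Int.castRingHom (ZMod 59)) = C u * ((X + C 39) * h59)) ∧
      Irreducible h59 := by
  refine ⟨⟨1, isUnit_one, ?_⟩, F59.h59_irreducible⟩
  have hC : (C 39 : (ZMod 59)[X]) = 39 := map_ofNat C 39
  have hz : (59 : (ZMod 59)[X]) = 0 := by
    exact_mod_cast CharP.cast_eq_zero ((ZMod 59)[X]) 59
  rw [map_one, one_mul, hC, fdelta, h59]
  simp only [Polynomial.map_add, Polynomial.map_sub, Polynomial.map_mul, Polynomial.map_pow,
    Polynomial.map_X, Polynomial.map_ofNat]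
  linear_combination ((1142) * X ^ 0 + (-22307) * X ^ 1 + (189798) * X ^ 2 + (-968845) * X ^ 3 + (3378856) * X ^
    4 + (-8632439) * X ^ 5 + (16826796) * X ^ 6 + (-25662875) * X ^ 7 + (31092159) * X ^ 8 +
    (-30158559) * X ^ 9 + (23447735) * X ^ 10 + (-14527345) * X ^ 11 + (7064196) * X ^ 12 +
    (-2616748) * X ^ 13 + (698119) * X ^ 14 + (-119965) * X ^ 15 + (9997) * X ^ 16) * hz
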